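/- Let λ and μ be partitions and let N be an integer. Then the number of partitions ρ with |ρ| = N, μ ≺ ρ and ρ ≺ λ equals the number of partitions ρ with |ρ| = |λ| + |μ| − N, μ ≺ ρ and ρ ≺ λ. -/

import Mathlib

/-- A partition: a weakly decreasing sequence of nonnegative integers, eventually zero. -/
structure PartitionSeq where
  part : ℕ → ℕ
  antitone' : ∀ ⦃i j : ℕ⦄, i ≤ j → part j ≤ part i
  eventually_zero : ∃ N : ℕ, ∀ i : ℕ, N ≤ i → part i = 0

/-- The size `|ν| = ∑_j ν_j` of a partition. -/
noncomputable def size (ν : PartitionSeq) : ℕ := ∑ᶠ j : ℕ, ν.part j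

/-- `Interlaces μ λ` means `μ ≺ λ`, i.e. `λ_0 ≥ μ_0 ≥ λ_1 ≥ μ_1 ≥ ⋯`. -/
def Interlaces (μ lam : PartitionSeq) : Prop :=
  ∀ j : ℕ, μ.part j ≤ lam.part j ∧ lam.part (j + 1) ≤ μ.part j

/-- Lower bound for the parts of `ρ` with `μ ≺ ρ ≺ λ`. -/
def loB (lam mu : PartitionSeq) (j : ℕ) : ℕ := max (mu.part j) (lam.part (j + 1))

/-- Upper bound for the parts of `ρ` with `μ ≺ ρ ≺ λ`. -/
def hiB (lam mu : PartitionSeq) : ℕ → ℕ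
  | 0 => lam.part 0
  | j + 1 => min (lam.part (j + 1)) (mu.part j)

theorem between_bounds {lam mu ρ : PartitionSeq} (h1 : Interlaces mu ρ) (h2 : Interlaces ρ lam)
    (j : ℕ) : loB lam mu j ≤ ρ.part j ∧ ρ.part j ≤ hiB lam mu j := by
  refine ⟨max_le (h1 j).1 (h2 j).2, ?_⟩
  cases j with
  | zero => exact (h2 0).1
  | succ j => exact le_min (h2 (j + 1)).1 (h1 j).2

theorem hiB_le (lam mu : PartitionSeq) (j : ℕ) : hiB lam mu j ≤ lam.part j := by
  cases j with
  | zero => exact le_rfl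
  | succ j => exact min_le_left _ _

theorem hiB_succ_le (lam mu : PartitionSeq) (j : ℕ) : hiB lam mu (j + 1) ≤ mu.part j :=
  min_le_right _ _

/-- The reflected partition. -/
def reflP (lam mu ρ : PartitionSeq) (h1 : Interlaces mu ρ) (h2 : Interlaces ρ lam) :
    PartitionSeq where
  part j := loB lam mu j + hiB lam mu j - ρ.part j
  antitone' := by
    apply antitone_nat_of_succ_le
    intro j
    have a := between_bounds h1 h2 j
    have b := between_bounds h1 h2 (j + 1)
    have c := hiB_succ_le lam mu j
    have d : mu.part j ≤ loB lam mu j := le_max_left _ _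
    omega
  eventually_zero := by
    obtain ⟨M, hM⟩ := lam.eventually_zero
    refine ⟨M, fun i hi => ?_⟩
    have a := between_bounds h1 h2 i
    have c := hiB_le lam mu i
    have d := hM i hi
    omega

theorem reflP_interlaces {lam mu ρ : PartitionSeq} (h1 : Interlaces mu ρ)
    (h2 : Interlaces ρ lam) :
    Interlaces mu (reflP lam mu ρ h1 h2) ∧ Interlaces (reflP lam mu ρ h1 h2) lam := by
  refine ⟨fun j => ?_, fun j => ?_⟩ <;>
  · have a := between_bounds h1 h2 j
    have b := between_bounds h1 h2 (j + 1)
    have c := hiB_succ_le lam mu j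
    have c' := hiB_le lam mu j
    have d : mu.part j ≤ loB lam mu j := le_max_left _ _
    have d' : lam.part (j + 1) ≤ loB lam mu j := le_max_right _ _
    simp only [reflP]
    omega

theorem size_eq_range (ν : PartitionSeq) (M : ℕ) (h : ∀ i, M ≤ i → ν.part i = 0) :
    size ν = ∑ j ∈ Finset.range M, ν.part j := by
  unfold size
  apply finsum_eq_sum_of_support_subset
  intro i hi
  simp only [Finset.coe_range, Set.mem_Iio]
  by_contra hc
  exact hi (h i (not_lt.mp hc))

theorem sum_bounds (lam mu : PartitionSeq) (M : ℕ) :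
    ∑ j ∈ Finset.range (M + 1), hiB lam mu j + ∑ j ∈ Finset.range M, loB lam mu j
      = ∑ j ∈ Finset.range (M + 1), lam.part j + ∑ j ∈ Finset.range M, mu.part j := by
  induction M with
  | zero => simp [hiB]
  | succ M ih =>
    rw [Finset.sum_range_succ _ (M + 1), Finset.sum_range_succ (loB lam mu),
      Finset.sum_range_succ lam.part (M + 1), Finset.sum_range_succ mu.part]
    have : hiB lam mu (M + 1) + loB lam mu M = lam.part (M + 1) + mu.part M := by
      simp only [hiB, loB]
      omega
    omega

theorem size_reflP {lam mu ρ : PartitionSeq} (h1 : Interlaces mu ρ) (h2 : Interlaces ρ lam) :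
    size (reflP lam mu ρ h1 h2) + size ρ = size lam + size mu := by
  obtain ⟨M, hM⟩ := lam.eventually_zero
  have hρ : ∀ i, M ≤ i → ρ.part i = 0 := fun i hi => by
    have := (h2 i).1
    have := hM i hi
    omega
  have hmu : ∀ i, M ≤ i → mu.part i = 0 := fun i hi => by
    have := (h1 i).1
    have := hρ i hi
    omega
  have hr : ∀ i, M ≤ i → (reflP lam mu ρ h1 h2).part i = 0 := fun i hi => by
    have := ((reflP_interlaces h1 h2).2 i).1
    have := hM i hi
    omega
  rw [size_eq_range _ (M + 1) (fun i hi => hr i (by omega)),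
    size_eq_range ρ (M + 1) (fun i hi => hρ i (by omega)),
    size_eq_range lam (M + 1) (fun i hi => hM i (by omega)),
    size_eq_range mu M hmu, ← sum_bounds, ← Finset.sum_add_distrib]
  have hlo : loB lam mu M = 0 := by
    have := (between_bounds h1 h2 M).1
    have := hρ M le_rfl
    omega
  have : ∑ j ∈ Finset.range M, loB lam mu j = ∑ j ∈ Finset.range (M + 1), loB lam mu j := by
    rw [Finset.sum_range_succ, hlo, add_zero]
  rw [this, ← Finset.sum_add_distrib]
  refine Finset.sum_congr rfl fun j _ => ?_
  have a := between_bounds h1 h2 j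
  simp only [reflP]
  omega

theorem PartitionSeq.ext_part {a b : PartitionSeq} (h : ∀ j, a.part j = b.part j) : a = b := by
  cases a
  cases b
  congr
  exact funext h

/-- For partitions `λ, μ` and `N ∈ ℤ`, the number of partitions `ρ` with
`|ρ| = N`, `μ ≺ ρ` and `ρ ≺ λ` equals the number of partitions `ρ` with
`|ρ| = |λ| + |μ| − N`, `μ ≺ ρ` and `ρ ≺ λ`. -/
theorem statement8 (lam mu : PartitionSeq) (N : ℤ) :
    {ρ : PartitionSeq | (size ρ : ℤ) = N ∧ Interlaces mu ρ ∧ Interlaces ρ lam}.ncard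
      = {ρ : PartitionSeq | (size ρ : ℤ) = (size lam : ℤ) + (size mu : ℤ) - N ∧
          Interlaces mu ρ ∧ Interlaces ρ lam}.ncard := by
  refine Set.ncard_congr (fun ρ h => reflP lam mu ρ h.2.1 h.2.2) ?_ ?_ ?_
  · intro ρ h
    refine ⟨?_, reflP_interlaces h.2.1 h.2.2⟩
    have := size_reflP h.2.1 h.2.2
    have := h.1
    omega
  · intro a b ha hb hab
    refine PartitionSeq.ext_part fun j => ?_
    have h := congrArg (fun ν => PartitionSeq.part ν j) hab
    have h1 := between_bounds ha.2.1 ha.2.2 j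
    have h2 := between_bounds hb.2.1 hb.2.2 j
    simp only [reflP] at h
    omega
  · intro b hb
    have hi := reflP_interlaces hb.2.1 hb.2.2
    refine ⟨reflP lam mu b hb.2.1 hb.2.2, ⟨?_, hi⟩, ?_⟩
    · have := size_reflP hb.2.1 hb.2.2
      have := hb.1
      omega
    · refine PartitionSeq.ext_part fun j => ?_
      have h2 := between_bounds hb.2.1 hb.2.2 j
      simp only [reflP]
      omega
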